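/- Let 1 ≤ s ≤ S < p/2, let u > 0, and set t = max{ √(uS/(n(p−S))), 2uS/(n(p−S)) }. Consider the test Δ that rejects if and only if Tr(A_{1:S}(Σ_n − I_p)) ≥ t. If σ ≥ (2(s+1)/s)·t, then P_{I_p}[Δ rejects] + sup_{Σ ∈ F_+(s,S,σ)} P_Σ[Δ accepts] ≤ 2·exp(−u/4), where P_{I_p} (resp. P_Σ) denotes the law of Σ_n when X_1,…,X_n are i.i.d. N_p(0, I_p) (resp. N_p(0, Σ)). -/

import Mathlib

open MeasureTheory Matrix Real
open scoped ENNReal BigOperators NNReal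

noncomputable def gaussianPDF {p : ℕ} (C : Matrix (Fin p) (Fin p) ℝ) (x : Fin p → ℝ) : ℝ≥0∞ :=
  ENNReal.ofReal ((2 * Real.pi) ^ (-(p : ℝ) / 2) * C.det ^ (-(1:ℝ)/2) *
    Real.exp (-(1/2) * (x ⬝ᵥ C⁻¹.mulVec x)))

/-- The centered multivariate Gaussian measure `N_p(0, C)` on `Fin p → ℝ`. -/
noncomputable def gaussianMeasure {p : ℕ} (C : Matrix (Fin p) (Fin p) ℝ) :
    Measure (Fin p → ℝ) :=
  MeasureTheory.volume.withDensity (gaussianPDF C)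

/-- The law of `n` i.i.d. `N_p(0, C)` vectors. -/
noncomputable def iidGaussian (n p : ℕ) (C : Matrix (Fin p) (Fin p) ℝ) :
    Measure (Fin n → Fin p → ℝ) :=
  MeasureTheory.volume.withDensity fun X => ∏ k, gaussianPDF C (X k)

/-- The sample covariance matrix `Σ_n = (1/n) ∑ X_k X_kᵀ`. -/
noncomputable def sampleCov {n p : ℕ} (X : Fin n → Fin p → ℝ) :
    Matrix (Fin p) (Fin p) ℝ :=
  (n : ℝ)⁻¹ • ∑ k, Matrix.of fun i j => X k i * X k j

/-- Frobenius norm of a matrix. -/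
noncomputable def frobNorm {p : ℕ} (M : Matrix (Fin p) (Fin p) ℝ) : ℝ :=
  Real.sqrt (∑ i, ∑ j, (M i j)^2)

/-- Spectral (ℓ²-operator) norm of a matrix. -/
noncomputable def specNorm {p : ℕ} (M : Matrix (Fin p) (Fin p) ℝ) : ℝ :=
  ‖Matrix.toEuclideanCLM (𝕜 := ℝ) M‖

/-- The matrix `A_j` with entries `1/(2(p-j))` on the `j`-th upper and lower diagonals. -/
noncomputable def lagMatrix (p j : ℕ) : Matrix (Fin p) (Fin p) ℝ :=
  Matrix.of fun k l => if ((k:ℤ) - (l:ℤ)).natAbs = j then 1/(2*((p:ℝ) - j)) else 0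

/-- Two-sided class `F(s,S,σ)` of sparse Toeplitz covariance matrices with
diagonal value `σ0`. -/
def memF (p s S : ℕ) (σ σ0 : ℝ) (C : Matrix (Fin p) (Fin p) ℝ) : Prop :=
  C.PosDef ∧ ∃ v : ℕ → ℝ, v 0 = σ0 ∧
    (∀ i j : Fin p, C i j = v ((i:ℤ) - (j:ℤ)).natAbs) ∧
    ∃ T : Finset ℕ, T ⊆ Finset.Icc 1 S ∧ T.card = s ∧
      (∀ j ∈ T, σ ≤ |v j|) ∧ (∀ j, 1 ≤ j → j ≤ p - 1 → j ∉ T → v j = 0)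

/-- One-sided class `F₊(s,S,σ)` of sparse Toeplitz covariance matrices with
diagonal value `σ0`. -/
def memFplus (p s S : ℕ) (σ σ0 : ℝ) (C : Matrix (Fin p) (Fin p) ℝ) : Prop :=
  C.PosDef ∧ ∃ v : ℕ → ℝ, v 0 = σ0 ∧
    (∀ i j : Fin p, C i j = v ((i:ℤ) - (j:ℤ)).natAbs) ∧
    ∃ T : Finset ℕ, T ⊆ Finset.Icc 1 S ∧ T.card = s ∧
      (∀ j ∈ T, σ ≤ v j) ∧ (∀ j, 1 ≤ j → j ≤ p - 1 → j ∉ T → v j = 0)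

/-! Under `N_p(0, C)` a quadratic form has Laplace transform
`E exp (xᵀ G x / 2) = det (1 - G C) ^ (-1/2)`. Expanding `log det` to second order, which is
legitimate as long as `|xᵀ G x| ≤ xᵀ C⁻¹ x / 2`, bounds it by
`exp ((tr (G C) + tr (G C)²) / 2)`, and Chernoff's method applied to `G = c M` gives the
Hanson–Wright inequality
`P (tr (M (Σ_n - C)) ≥ t) ≤ exp (-(n / 8) min (t² / V) (t / B))`
with `tr (M C)² ≤ V` and `|xᵀ M x| ≤ B xᵀ C⁻¹ x`.

The matrix `A = A_{1:S}` has norm at most `b = S / (p - S)` and `tr A² ≤ b / 2`. Under the null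
hypothesis `M = A` gives `B = b`, `V = b / 2`, so that the choice of `t` yields `exp (-u / 4)`.
Under an alternative `C` with symbol `v`, the mean of the statistic is `m = ∑ v_d ≥ s σ` while the
norm of `C` is at most `K = 1 + 2 m`; hence `M = -A` gives a deviation `K t` with probability at
most `exp (-u / 4)`, and `K t ≤ m - t` by the choice of `σ` and because `σ < 1`.
-/

section GaussianIntegral

theorem lintegral_fintype_prod_eq_prod {ι : Type*} [Fintype ι] {E : ι → Type*}
    [∀ i, MeasurableSpace (E i)] (μ : ∀ i, Measure (E i)) [∀ i, SigmaFinite (μ i)]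
    {f : ∀ i, E i → ℝ≥0∞} (hf : ∀ i, Measurable (f i)) :
    ∫⁻ x, ∏ i, f i (x i) ∂Measure.pi μ = ∏ i, ∫⁻ x, f i x ∂μ i := by
  classical
  have hmeas : Measurable fun x : ∀ i, E i => ∏ i, f i (x i) := by fun_prop
  have hmarginal (s : Finset ι) (x : ∀ i, E i) : lmarginal μ s (fun x => ∏ i, f i (x i)) x
      = ∏ i, if i ∈ s then ∫⁻ y, f i y ∂μ i else f i (x i) := by
    induction s using Finset.induction_on generalizing x with
    | empty => simp
    | insert i s hi ih =>
      have hrest (y : E i) : ∏ j ∈ Finset.univ.erase i,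
            (if j ∈ s then ∫⁻ z, f j z ∂μ j else f j (Function.update x i y j))
          = ∏ j ∈ Finset.univ.erase i,
            if j ∈ insert i s then ∫⁻ z, f j z ∂μ j else f j (x j) :=
        Finset.prod_congr rfl fun j hj => by
          simp only [Finset.mem_insert, Finset.ne_of_mem_erase hj, false_or,
            Function.update_of_ne (Finset.ne_of_mem_erase hj)]
      simp_rw [lmarginal_insert _ hmeas hi, ih, ← Finset.mul_prod_erase _ _ (Finset.mem_univ i),
        hrest, if_neg hi, Function.update_self, if_pos (Finset.mem_insert_self i s)]
      exact lintegral_mul_const _ (hf i)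
  cases isEmpty_or_nonempty (∀ i, E i) with
  | inl h =>
    obtain ⟨i, hi⟩ := isEmpty_pi.1 h
    rw [lintegral_of_isEmpty, Finset.prod_eq_zero (Finset.mem_univ i) (lintegral_of_isEmpty _ _)]
  | inr h =>
    obtain ⟨x⟩ := h
    rw [lintegral_eq_lmarginal_univ x, hmarginal]
    simp only [Finset.mem_univ, if_true]

variable {ι : Type*} [Fintype ι]

theorem measurable_dotProduct_mulVec (M : Matrix ι ι ℝ) :
    Measurable fun x : ι → ℝ => x ⬝ᵥ M *ᵥ x :=
  Continuous.measurable (by fun_prop)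

theorem lintegral_exp_neg_half_sq :
    ∫⁻ x : ℝ, ENNReal.ofReal (exp (-(1 / 2) * x ^ 2)) = ENNReal.ofReal √(2 * π) := by
  rw [← ofReal_integral_eq_lintegral_ofReal (integrable_exp_neg_mul_sq (by norm_num))
    (.of_forall fun _ => (exp_pos _).le), integral_gaussian, div_div_eq_mul_div, div_one, mul_comm]

theorem dotProduct_mulVec_of_isHermitian {R : Matrix ι ι ℝ} (hR : R.IsHermitian) (x y : ι → ℝ) :
    x ⬝ᵥ R *ᵥ y = (R *ᵥ x) ⬝ᵥ y := by
  rw [dotProduct_mulVec, ← mulVec_transpose, ← conjTranspose_eq_transpose_of_trivial, hR.eq]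

theorem exists_posDef_mul_self_eq {C : Matrix ι ι ℝ} (hC : C.PosDef) :
    ∃ R : Matrix ι ι ℝ, R.PosDef ∧ R * R = C := by
  classical
  open scoped MatrixOrder in
  exact ⟨CFC.sqrt C, (hC.isStrictlyPositive.sqrt C).posDef,
    CFC.sqrt_mul_sqrt_self C hC.posSemidef.nonneg⟩

variable [DecidableEq ι]

theorem mulVec_dotProduct_inv_mul_self_mulVec {R : Matrix ι ι ℝ} (hR : R.PosDef) (x : ι → ℝ) :
    (R *ᵥ x) ⬝ᵥ (R * R)⁻¹ *ᵥ (R *ᵥ x) = x ⬝ᵥ x := by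
  have hRu : IsUnit R.det := hR.det_pos.ne'.isUnit
  rw [← dotProduct_mulVec_of_isHermitian hR.isHermitian, mulVec_mulVec, mulVec_mulVec,
    Matrix.mul_inv_rev, mul_assoc, nonsing_inv_mul_cancel_right _ _ hRu, mul_nonsing_inv _ hRu,
    one_mulVec]

theorem lintegral_exp_neg_half_dotProduct_mulVec {N : Matrix ι ι ℝ} (hN : N.PosDef) :
    ∫⁻ x : ι → ℝ, ENNReal.ofReal (exp (-(1 / 2) * (x ⬝ᵥ N *ᵥ x)))
      = ENNReal.ofReal ((2 * π) ^ ((Fintype.card ι : ℝ) / 2) * N.det ^ (-(1 : ℝ) / 2)) := by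
  obtain ⟨R, hR, rfl⟩ := exists_posDef_mul_self_eq hN
  have hquad (x : ι → ℝ) : ENNReal.ofReal (exp (-(1 / 2) * (x ⬝ᵥ (R * R) *ᵥ x)))
      = ∏ i, ENNReal.ofReal (exp (-(1 / 2) * (toLin' R x) i ^ 2)) := by
    rw [← mulVec_mulVec, dotProduct_mulVec_of_isHermitian hR.isHermitian,
      ← ENNReal.ofReal_prod_of_nonneg fun _ _ => (exp_pos _).le, ← exp_sum, ← Finset.mul_sum]
    simp only [dotProduct, toLin'_apply, sq]
  have hconst : √(2 * π) ^ Fintype.card ι = (2 * π) ^ ((Fintype.card ι : ℝ) / 2) := by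
    rw [sqrt_eq_rpow, ← rpow_mul_natCast (by positivity), one_div_mul_eq_div]
  have hdet : |R.det⁻¹| = (R * R).det ^ (-(1 : ℝ) / 2) := by
    rw [neg_div, rpow_neg hN.det_pos.le, ← sqrt_eq_rpow, det_mul, sqrt_mul_self_eq_abs, abs_inv]
  calc ∫⁻ x : ι → ℝ, ENNReal.ofReal (exp (-(1 / 2) * (x ⬝ᵥ (R * R) *ᵥ x)))
      = ENNReal.ofReal |R.det⁻¹| *
          ∫⁻ y : ι → ℝ, ∏ i, ENNReal.ofReal (exp (-(1 / 2) * y i ^ 2)) := by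
        simp_rw [hquad]
        rw [← lintegral_map (f := fun y : ι → ℝ => ∏ i, ENNReal.ofReal (exp (-(1 / 2) * y i ^ 2)))
          (by fun_prop) (toLin' R).continuous_of_finiteDimensional.measurable,
          map_matrix_volume_pi_eq_smul_volume_pi hR.det_pos.ne', lintegral_smul_measure,
          smul_eq_mul]
    _ = ENNReal.ofReal |R.det⁻¹| * ENNReal.ofReal √(2 * π) ^ Fintype.card ι := by
        rw [volume_pi, lintegral_fintype_prod_eq_prod (fun _ => volume)
          (f := fun _ y => ENNReal.ofReal (exp (-(1 / 2) * y ^ 2))) fun _ => by fun_prop]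
        simp only [lintegral_exp_neg_half_sq, Finset.prod_const, Finset.card_univ]
    _ = _ := by
        rw [← ENNReal.ofReal_pow (sqrt_nonneg _), ← ENNReal.ofReal_mul (abs_nonneg _), mul_comm,
          hconst, hdet]

end GaussianIntegral

section LogDet

theorem exp_neg_sub_sq_le_one_sub {y : ℝ} (hy : |y| ≤ 1 / 2) : exp (-y - y ^ 2) ≤ 1 - y := by
  have hpos : 0 < 1 - y := by linarith [le_abs_self y]
  have hlog : |log (1 - y) + y| ≤ |y| ^ 2 * (1 - |y|)⁻¹ / 2 := by
    have h := Complex.norm_log_one_add_sub_self_le (z := ((-y : ℝ) : ℂ))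
      (by rw [Complex.norm_real, norm_neg, norm_eq_abs]; linarith)
    rwa [← Complex.ofReal_one, ← Complex.ofReal_add, ← Complex.ofReal_log (by linarith),
      ← Complex.ofReal_sub, Complex.norm_real, Complex.norm_real, norm_neg, norm_eq_abs,
      norm_eq_abs, sub_neg_eq_add, ← sub_eq_add_neg] at h
  have hinv : (1 - |y|)⁻¹ ≤ 2 := inv_le_of_inv_le₀ (by norm_num) (by linarith)
  rw [← le_log_iff_exp_le hpos, ← sq_abs y]
  nlinarith [neg_le_of_abs_le hlog, sq_nonneg |y|]

variable {ι : Type*} [Fintype ι] [DecidableEq ι]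

theorem trace_mul_self_eq_sum_eigenvalues_sq {Y : Matrix ι ι ℝ} (hY : Y.IsHermitian) :
    (Y * Y).trace = ∑ i, hY.eigenvalues i ^ 2 := by
  conv_lhs => rw [hY.spectral_theorem, ← map_mul, Unitary.conjStarAlgAut_apply, trace_mul_cycle]
  simp [diagonal_mul_diagonal, trace_diagonal, sq]

theorem det_one_sub_eq_prod_eigenvalues {Y : Matrix ι ι ℝ} (hY : Y.IsHermitian) :
    (1 - Y).det = ∏ i, (1 - hY.eigenvalues i) := by
  have h := congrArg (Polynomial.eval 1) hY.charpoly_eq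
  simpa only [eval_charpoly, Polynomial.eval_prod, map_one, Polynomial.eval_sub, Polynomial.eval_X,
    Polynomial.eval_C, RCLike.ofReal_real_eq_id, id_eq] using h

theorem abs_eigenvalues_le {Y : Matrix ι ι ℝ} (hY : Y.IsHermitian) {b : ℝ}
    (hb : ∀ x, |x ⬝ᵥ Y *ᵥ x| ≤ b * (x ⬝ᵥ x)) (i : ι) : |hY.eigenvalues i| ≤ b := by
  have hnorm : (hY.eigenvectorBasis i).ofLp ⬝ᵥ (hY.eigenvectorBasis i).ofLp = 1 := by
    have h := hY.eigenvectorBasis.orthonormal.1 i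
    rw [EuclideanSpace.norm_eq, sqrt_eq_one] at h
    simpa [dotProduct, sq] using h
  simpa only [hY.mulVec_eigenvectorBasis, dotProduct_smul, hnorm, smul_eq_mul, mul_one]
    using hb (hY.eigenvectorBasis i).ofLp

theorem exp_neg_trace_le_det_one_sub {Y : Matrix ι ι ℝ} (hY : Y.IsHermitian)
    (hb : ∀ x, |x ⬝ᵥ Y *ᵥ x| ≤ 1 / 2 * (x ⬝ᵥ x)) :
    exp (-Y.trace - (Y * Y).trace) ≤ (1 - Y).det := by
  rw [det_one_sub_eq_prod_eigenvalues hY, trace_mul_self_eq_sum_eigenvalues_sq hY,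
    hY.trace_eq_sum_eigenvalues, ← Finset.sum_neg_distrib, ← Finset.sum_sub_distrib, exp_sum]
  exact Finset.prod_le_prod (fun _ _ => (exp_pos _).le) fun i _ =>
    exp_neg_sub_sq_le_one_sub (abs_eigenvalues_le hY hb i)

theorem exp_neg_trace_le_det_one_sub_mul {C G : Matrix ι ι ℝ} (hC : C.PosDef)
    (hG : G.IsHermitian) (hGC : ∀ x, |x ⬝ᵥ G *ᵥ x| ≤ 1 / 2 * (x ⬝ᵥ C⁻¹ *ᵥ x)) :
    exp (-(G * C).trace - (G * C * (G * C)).trace) ≤ (1 - G * C).det := by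
  obtain ⟨R, hR, rfl⟩ := exists_posDef_mul_self_eq hC
  have hquad (x : ι → ℝ) : x ⬝ᵥ (R * G * R) *ᵥ x = (R *ᵥ x) ⬝ᵥ G *ᵥ (R *ᵥ x) := by
    rw [← mulVec_mulVec, ← mulVec_mulVec, dotProduct_mulVec_of_isHermitian hR.isHermitian]
  have hdet : (1 - R * G * R).det = (1 - G * (R * R)).det := by
    rw [mul_assoc, det_one_sub_mul_comm, mul_assoc]
  have htrace : (R * G * R).trace = (G * (R * R)).trace := by
    rw [mul_assoc, trace_mul_comm, mul_assoc]
  have htrace_sq : (R * G * R * (R * G * R)).trace = (G * (R * R) * (G * (R * R))).trace := by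
    rw [mul_assoc R, mul_assoc R, trace_mul_comm]
    simp only [mul_assoc]
  rw [← hdet, ← htrace, ← htrace_sq]
  refine exp_neg_trace_le_det_one_sub ?_ fun x => ?_
  · simpa only [hR.isHermitian.eq] using isHermitian_mul_mul_conjTranspose R hG
  · rw [hquad, ← mulVec_dotProduct_inv_mul_self_mulVec hR x]
    exact hGC _

end LogDet

section Comparison

variable {ι : Type*} [Fintype ι]

theorem abs_dotProduct_mulVec_le {M : Matrix ι ι ℝ} {b : ℝ} (hM : M.IsSymm)
    (hrow : ∀ i, ∑ j, |M i j| ≤ b) (x : ι → ℝ) : |x ⬝ᵥ M *ᵥ x| ≤ b * (x ⬝ᵥ x) := by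
  have hcol : ∑ i, ∑ j, |M i j| * x j ^ 2 = ∑ i, ∑ j, |M i j| * x i ^ 2 := by
    rw [Finset.sum_comm]
    simp_rw [hM.apply]
  calc |x ⬝ᵥ M *ᵥ x| = |∑ i, ∑ j, x i * (M i j * x j)| := by
        simp only [dotProduct, mulVec, Finset.mul_sum]
    _ ≤ ∑ i, ∑ j, |x i * (M i j * x j)| :=
        (Finset.abs_sum_le_sum_abs _ _).trans
          (Finset.sum_le_sum fun _ _ => Finset.abs_sum_le_sum_abs _ _)
    _ ≤ ∑ i, ∑ j, (1 / 2 * (|M i j| * x i ^ 2) + 1 / 2 * (|M i j| * x j ^ 2)) := by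
        refine Finset.sum_le_sum fun i _ => Finset.sum_le_sum fun j _ => ?_
        rw [abs_mul, abs_mul, ← sq_abs (x i), ← sq_abs (x j)]
        nlinarith [mul_nonneg (abs_nonneg (M i j)) (sq_nonneg (|x i| - |x j|))]
    _ = ∑ i, ∑ j, |M i j| * x i ^ 2 := by
        simp only [Finset.sum_add_distrib, ← Finset.mul_sum, hcol]
        ring
    _ ≤ b * (x ⬝ᵥ x) := by
        rw [dotProduct, Finset.mul_sum]
        refine Finset.sum_le_sum fun i _ => ?_
        rw [← Finset.sum_mul, sq]
        exact mul_le_mul_of_nonneg_right (hrow i) (mul_self_nonneg _)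

theorem trace_transpose_mul_mul_le {κ : Type*} [Fintype κ] {C : Matrix ι ι ℝ} {K : ℝ}
    (hC : ∀ x, x ⬝ᵥ C *ᵥ x ≤ K * (x ⬝ᵥ x)) (N : Matrix ι κ ℝ) :
    (Nᵀ * C * N).trace ≤ K * (Nᵀ * N).trace := by
  rw [Matrix.mul_assoc, trace, trace, Finset.mul_sum]
  exact Finset.sum_le_sum fun j _ => hC (N.col j)

theorem trace_mul_mul_self_le {C M : Matrix ι ι ℝ} {K : ℝ} (hC : C.PosDef) (hM : M.IsSymm)
    (hK : 0 ≤ K) (hCK : ∀ x, x ⬝ᵥ C *ᵥ x ≤ K * (x ⬝ᵥ x)) :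
    (M * C * (M * C)).trace ≤ K ^ 2 * (M * M).trace := by
  obtain ⟨R, hR, rfl⟩ := exists_posDef_mul_self_eq hC
  have hRt : Rᵀ = R := by
    rw [← conjTranspose_eq_transpose_of_trivial, hR.isHermitian.eq]
  calc (M * (R * R) * (M * (R * R))).trace = ((M * R)ᵀ * (R * R) * (M * R)).trace := by
        rw [transpose_mul, hM.eq, hRt, Matrix.mul_assoc R, Matrix.mul_assoc R, trace_mul_comm R]
        simp only [Matrix.mul_assoc]
    _ ≤ K * ((M * R)ᵀ * (M * R)).trace := trace_transpose_mul_mul_le hCK _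
    _ = K * (Mᵀ * (R * R) * M).trace := by
        rw [transpose_mul, hM.eq, hRt, Matrix.mul_assoc R, trace_mul_comm R,
          trace_mul_comm (M * (R * R))]
        simp only [Matrix.mul_assoc]
    _ ≤ K * (K * (Mᵀ * M).trace) :=
        mul_le_mul_of_nonneg_left (trace_transpose_mul_mul_le hCK M) hK
    _ = K ^ 2 * (M * M).trace := by rw [hM.eq, ← mul_assoc, sq]

theorem dotProduct_self_le_mul_inv [DecidableEq ι] {C : Matrix ι ι ℝ} {K : ℝ} (hC : C.PosDef)
    (hCK : ∀ x, x ⬝ᵥ C *ᵥ x ≤ K * (x ⬝ᵥ x)) (x : ι → ℝ) : x ⬝ᵥ x ≤ K * (x ⬝ᵥ C⁻¹ *ᵥ x) := by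
  obtain ⟨R, hR, rfl⟩ := exists_posDef_mul_self_eq hC
  obtain ⟨y, rfl⟩ : ∃ y, R *ᵥ y = x :=
    ⟨R⁻¹ *ᵥ x, by rw [mulVec_mulVec, mul_nonsing_inv _ hR.det_pos.ne'.isUnit, one_mulVec]⟩
  have hCy := hCK y
  rwa [← mulVec_mulVec, dotProduct_mulVec_of_isHermitian hR.isHermitian,
    ← mulVec_dotProduct_inv_mul_self_mulVec hR y] at hCy

end Comparison

section SampleCovariance

variable {p : ℕ} {C : Matrix (Fin p) (Fin p) ℝ}

theorem measurable_gaussianPDF (C : Matrix (Fin p) (Fin p) ℝ) : Measurable (gaussianPDF C) := by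
  have := measurable_dotProduct_mulVec C⁻¹
  unfold gaussianPDF
  fun_prop

theorem lintegral_gaussianPDF_mul_exp_quadratic {G : Matrix (Fin p) (Fin p) ℝ} (hC : C.PosDef)
    (hG : (C⁻¹ - G).PosDef) :
    ∫⁻ x, gaussianPDF C x * ENNReal.ofReal (exp (1 / 2 * (x ⬝ᵥ G *ᵥ x)))
      = ENNReal.ofReal ((1 - G * C).det ^ (-(1 : ℝ) / 2)) := by
  have hconst : 0 ≤ (2 * π) ^ (-(p : ℝ) / 2) * C.det ^ (-(1 : ℝ) / 2) :=
    mul_nonneg (by positivity) (rpow_nonneg hC.det_pos.le _)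
  have hpi : (2 * π) ^ (-(p : ℝ) / 2) * (2 * π) ^ ((p : ℝ) / 2) = 1 := by
    rw [← rpow_add (by positivity), ← add_div, neg_add_cancel, zero_div, rpow_zero]
  have hdet : (1 - G * C).det = (C⁻¹ - G).det * C.det := by
    rw [← det_mul, sub_mul, nonsing_inv_mul _ hC.det_pos.ne'.isUnit]
  calc ∫⁻ x, gaussianPDF C x * ENNReal.ofReal (exp (1 / 2 * (x ⬝ᵥ G *ᵥ x)))
      = ∫⁻ x, ENNReal.ofReal ((2 * π) ^ (-(p : ℝ) / 2) * C.det ^ (-(1 : ℝ) / 2)) *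
          ENNReal.ofReal (exp (-(1 / 2) * (x ⬝ᵥ (C⁻¹ - G) *ᵥ x))) := by
        refine lintegral_congr fun x => ?_
        rw [gaussianPDF, ENNReal.ofReal_mul hconst, mul_assoc, ← ENNReal.ofReal_mul (exp_pos _).le,
          ← exp_add, sub_mulVec, dotProduct_sub]
        congr 3
        ring
    _ = ENNReal.ofReal ((1 - G * C).det ^ (-(1 : ℝ) / 2)) := by
        rw [lintegral_const_mul' _ _ ENNReal.ofReal_ne_top,
          lintegral_exp_neg_half_dotProduct_mulVec hG, ← ENNReal.ofReal_mul hconst,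
          Fintype.card_fin, hdet, mul_rpow hG.det_pos.le hC.det_pos.le]
        congr 1
        linear_combination C.det ^ (-(1 : ℝ) / 2) * (C⁻¹ - G).det ^ (-(1 : ℝ) / 2) * hpi

theorem lintegral_gaussianPDF_mul_exp_quadratic_le {G : Matrix (Fin p) (Fin p) ℝ} (hC : C.PosDef)
    (hG : G.IsHermitian) (hGC : ∀ x, |x ⬝ᵥ G *ᵥ x| ≤ 1 / 2 * (x ⬝ᵥ C⁻¹ *ᵥ x)) :
    ∫⁻ x, gaussianPDF C x * ENNReal.ofReal (exp (1 / 2 * (x ⬝ᵥ G *ᵥ x)))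
      ≤ ENNReal.ofReal (exp (1 / 2 * ((G * C).trace + (G * C * (G * C)).trace))) := by
  have hpos : (C⁻¹ - G).PosDef := by
    refine PosDef.of_dotProduct_mulVec_pos (hC.inv.isHermitian.sub hG) fun x hx => ?_
    have hinv := hC.inv.dotProduct_mulVec_pos hx
    rw [star_trivial] at hinv ⊢
    rw [sub_mulVec, dotProduct_sub]
    linarith [le_of_abs_le (hGC x)]
  rw [lintegral_gaussianPDF_mul_exp_quadratic hC hpos]
  refine ENNReal.ofReal_le_ofReal ((rpow_le_rpow_of_nonpos (exp_pos _)
    (exp_neg_trace_le_det_one_sub_mul hC hG hGC) (by norm_num)).trans_eq ?_)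
  rw [← exp_mul]
  ring_nf

theorem iidGaussian_le_exp_neg_mul_lintegral_pow (n : ℕ) (C : Matrix (Fin p) (Fin p) ℝ)
    {f : (Fin p → ℝ) → ℝ} (hf : Measurable f) (θ : ℝ) :
    iidGaussian n p C {X | θ ≤ ∑ k, f (X k)}
      ≤ ENNReal.ofReal (exp (-θ)) *
        (∫⁻ x, gaussianPDF C x * ENNReal.ofReal (exp (f x))) ^ n := by
  have hmeas : MeasurableSet {X : Fin n → Fin p → ℝ | θ ≤ ∑ k, f (X k)} :=
    measurableSet_le measurable_const (by fun_prop)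
  have hpdf := measurable_gaussianPDF C
  calc iidGaussian n p C {X | θ ≤ ∑ k, f (X k)}
      ≤ ∫⁻ X : Fin n → Fin p → ℝ, ENNReal.ofReal (exp (-θ)) *
          ∏ k, (gaussianPDF C (X k) * ENNReal.ofReal (exp (f (X k)))) := by
        rw [iidGaussian, withDensity_apply _ hmeas]
        refine (setLIntegral_mono' hmeas fun X hX => ?_).trans (setLIntegral_le_lintegral _ _)
        rw [Finset.prod_mul_distrib, ← ENNReal.ofReal_prod_of_nonneg fun _ _ => (exp_pos _).le,
          ← exp_sum, mul_left_comm, ← ENNReal.ofReal_mul (exp_pos _).le, ← exp_add]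
        refine le_mul_of_one_le_right' ?_
        rw [ENNReal.one_le_ofReal, one_le_exp_iff, neg_add_eq_sub, sub_nonneg]
        exact hX
    _ = _ := by
        rw [lintegral_const_mul' _ _ ENNReal.ofReal_ne_top, volume_pi,
          lintegral_fintype_prod_eq_prod (fun _ => volume)
            (f := fun _ x => gaussianPDF C x * ENNReal.ofReal (exp (f x))) fun _ => by fun_prop,
          Finset.prod_const, Finset.card_fin]

theorem natCast_mul_trace_mul_sampleCov {n : ℕ} (M : Matrix (Fin p) (Fin p) ℝ)
    (X : Fin n → Fin p → ℝ) :
    n * (M * sampleCov X).trace = ∑ k, X k ⬝ᵥ M *ᵥ X k := by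
  have hsum : (M * ∑ k, vecMulVec (X k) (X k)).trace = ∑ k, X k ⬝ᵥ M *ᵥ X k := by
    simp only [Finset.mul_sum, trace_sum, mul_vecMulVec, trace_vecMulVec, dotProduct_comm]
  rcases n.eq_zero_or_pos with rfl | hn
  · simp
  · rw [sampleCov, mul_smul_comm, trace_smul, smul_eq_mul, ← hsum,
      mul_inv_cancel_left₀ (Nat.cast_pos.2 hn).ne']
    rfl

theorem iidGaussian_hansonWright (n : ℕ) {M : Matrix (Fin p) (Fin p) ℝ} {B V t : ℝ}
    (hC : C.PosDef) (hM : M.IsHermitian) (hB : 0 < B) (hV : 0 < V) (ht : 0 ≤ t)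
    (hMB : ∀ x, |x ⬝ᵥ M *ᵥ x| ≤ B * (x ⬝ᵥ C⁻¹ *ᵥ x)) (hMV : (M * C * (M * C)).trace ≤ V) :
    iidGaussian n p C {X | t ≤ (M * (sampleCov X - C)).trace}
      ≤ ENNReal.ofReal (exp (-(n / 8 * min (t ^ 2 / V) (t / B)))) := by
  -- The exponent `-n c t / 2 + n c ^ 2 V / 2` is minimised at `c = t / (2 V)`, but the Laplace
  -- transform is only controlled for `c ≤ 1 / (2 B)`.
  obtain ⟨c, hc0, hcV, hcB, hct⟩ : ∃ c : ℝ, 0 ≤ c ∧ c * V ≤ t / 2 ∧ c * B ≤ 1 / 2 ∧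
      2 * (c * t) = min (t ^ 2 / V) (t / B) := by
    refine ⟨min (t / V) (1 / B) / 2, by positivity, ?_, ?_, ?_⟩
    · linarith [mul_le_mul_of_nonneg_right (min_le_left (t / V) (1 / B)) hV.le,
        div_mul_cancel₀ t hV.ne']
    · linarith [mul_le_mul_of_nonneg_right (min_le_right (t / V) (1 / B)) hB.le,
        div_mul_cancel₀ 1 hB.ne']
    · rw [← mul_assoc, mul_div_cancel₀ _ two_ne_zero, min_mul_of_nonneg _ _ ht]
      congr 1 <;> ring
  have hquad (x : Fin p → ℝ) : |x ⬝ᵥ (c • M) *ᵥ x| ≤ 1 / 2 * (x ⬝ᵥ C⁻¹ *ᵥ x) := by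
    have hinv : 0 ≤ x ⬝ᵥ C⁻¹ *ᵥ x := hC.inv.posSemidef.dotProduct_mulVec_nonneg x
    rw [smul_mulVec, dotProduct_smul, smul_eq_mul, abs_mul, abs_of_nonneg hc0]
    nlinarith [mul_le_mul_of_nonneg_left (hMB x) hc0]
  have hset : {X : Fin n → Fin p → ℝ | t ≤ (M * (sampleCov X - C)).trace} ⊆
      {X | n * (c / 2 * (t + (M * C).trace)) ≤ ∑ k, 1 / 2 * (X k ⬝ᵥ (c • M) *ᵥ X k)} := by
    intro X (hX : t ≤ _)
    rw [Matrix.mul_sub, trace_sub, le_sub_iff_add_le] at hX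
    rw [Set.mem_ofPred_eq, ← Finset.mul_sum, ← natCast_mul_trace_mul_sampleCov, smul_mul_assoc,
      trace_smul, smul_eq_mul]
    nlinarith [mul_le_mul_of_nonneg_left hX (mul_nonneg n.cast_nonneg hc0)]
  refine (measure_mono hset).trans ((iidGaussian_le_exp_neg_mul_lintegral_pow n C
    ((measurable_dotProduct_mulVec _).const_mul _) _).trans ?_)
  refine (mul_le_mul_right (pow_le_pow_left' (lintegral_gaussianPDF_mul_exp_quadratic_le hC
    (hM.smul (.all c)) hquad) n) _).trans ?_
  rw [← ENNReal.ofReal_pow (exp_pos _).le, ← exp_nat_mul, ← ENNReal.ofReal_mul (exp_pos _).le,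
    ← exp_add]
  refine ENNReal.ofReal_le_ofReal (exp_le_exp.2 ?_)
  simp only [smul_mul_assoc, mul_smul_comm, trace_smul, smul_eq_mul, ← hct]
  have hvar : c * (c * (M * C * (M * C)).trace) ≤ c * (t / 2) :=
    mul_le_mul_of_nonneg_left ((mul_le_mul_of_nonneg_left hMV hc0).trans hcV) hc0
  nlinarith [mul_le_mul_of_nonneg_left hvar n.cast_nonneg]

theorem iidGaussian_hansonWright_of_le (n : ℕ) {M : Matrix (Fin p) (Fin p) ℝ} {K b v t : ℝ}
    (hC : C.PosDef) (hM : M.IsSymm) (hK : 0 < K) (hb : 0 < b) (hv : 0 < v) (ht : 0 ≤ t)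
    (hCK : ∀ x, x ⬝ᵥ C *ᵥ x ≤ K * (x ⬝ᵥ x)) (hMb : ∀ x, |x ⬝ᵥ M *ᵥ x| ≤ b * (x ⬝ᵥ x))
    (hMv : (M * M).trace ≤ v) :
    iidGaussian n p C {X | K * t ≤ (M * (sampleCov X - C)).trace}
      ≤ ENNReal.ofReal (exp (-(n / 8 * min (t ^ 2 / v) (t / b)))) := by
  have hvar : (K * t) ^ 2 / (K ^ 2 * v) = t ^ 2 / v := by
    rw [mul_pow, mul_div_mul_left _ _ (by positivity)]
  have hnorm : K * t / (b * K) = t / b := by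
    rw [mul_comm b, mul_div_mul_left _ _ hK.ne']
  rw [← hvar, ← hnorm]
  refine iidGaussian_hansonWright n hC (by rwa [IsHermitian,
    conjTranspose_eq_transpose_of_trivial]) (by positivity) (by positivity) (by positivity)
    (fun x => (hMb x).trans ?_)
    ((trace_mul_mul_self_le hC hM hK.le hCK).trans (mul_le_mul_of_nonneg_left hMv (by positivity)))
  rw [mul_assoc]
  exact mul_le_mul_of_nonneg_left (dotProduct_self_le_mul_inv hC hCK x) hb.le

end SampleCovariance

section Toeplitz

/-- The symmetric Toeplitz matrix of order `p` with entry `f d` at distance `d` from the diagonal,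
so that the `σ_j` of a covariance matrix in `F₊(s,S,σ)` are the values of its symbol `f`. -/
def symmToeplitz {R : Type*} (p : ℕ) (f : ℕ → R) : Matrix (Fin p) (Fin p) R :=
  of fun i j => f ((i : ℤ) - (j : ℤ)).natAbs

theorem isSymm_symmToeplitz {R : Type*} (p : ℕ) (f : ℕ → R) : (symmToeplitz p f).IsSymm := by
  ext i j
  rw [transpose_apply, symmToeplitz, of_apply, of_apply, ← Int.natAbs_neg, neg_sub]

theorem sum_symmToeplitz_apply {R : Type*} [AddCommMonoid R] {p : ℕ} (f : ℕ → R) (i : Fin p) :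
    ∑ j, symmToeplitz p f i j
      = ∑ d ∈ Finset.range (i + 1), f d + ∑ d ∈ Finset.Ico 1 (p - i), f d := by
  simp only [symmToeplitz, of_apply]
  rw [Fin.sum_univ_eq_sum_range (fun j => f ((i : ℤ) - (j : ℤ)).natAbs),
    ← Finset.sum_range_add_sum_Ico _ i.isLt, ← Finset.sum_range_reflect f,
    Finset.sum_Ico_eq_sum_range, Finset.sum_Ico_eq_sum_range, Nat.sub_sub]
  congr 1
  · exact Finset.sum_congr rfl fun j hj => congrArg f (by have := Finset.mem_range.1 hj; omega)
  · exact Finset.sum_congr rfl fun j _ => congrArg f (by omega)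

theorem sum_abs_symmToeplitz_apply_le {p : ℕ} {f : ℕ → ℝ} (hf : ∀ d < p, 0 ≤ f d) (i : Fin p) :
    ∑ j, |symmToeplitz p f i j| ≤ f 0 + 2 * ∑ d ∈ Finset.Ico 1 p, f d := by
  have habs (j : Fin p) : |symmToeplitz p f i j| = symmToeplitz p f i j :=
    abs_of_nonneg (hf _ (by omega))
  have hpos {a : ℕ} (ha : a ≤ p) :
      ∑ d ∈ Finset.Ico 1 a, f d ≤ ∑ d ∈ Finset.Ico 1 p, f d :=
    Finset.sum_le_sum_of_subset_of_nonneg (Finset.Ico_subset_Ico_right ha) fun d hd _ =>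
      hf d (Finset.mem_Ico.1 hd).2
  simp_rw [habs, sum_symmToeplitz_apply, Finset.range_eq_Ico,
    Finset.sum_eq_sum_Ico_succ_bot i.val.succ_pos]
  linarith [hpos i.isLt, hpos (p.sub_le i)]

theorem sum_sum_symmToeplitz_apply {R : Type*} [CommRing R] (p : ℕ) (f : ℕ → R) :
    ∑ i, ∑ j, symmToeplitz p f i j
      = p * f 0 + ∑ d ∈ Finset.Ico 1 p, 2 * ((p : R) - d) * f d := by
  have hlower : ∑ i : Fin p, ∑ d ∈ Finset.Ico 1 (i + 1 : ℕ), f d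
      = ∑ d ∈ Finset.Ico 1 p, ((p : R) - d) * f d := by
    rw [Fin.sum_univ_eq_sum_range (fun i => ∑ d ∈ Finset.Ico 1 (i + 1), f d),
      Finset.sum_comm' (t' := Finset.Ico 1 p) (s' := fun d => Finset.Ico d p)
        (by simp only [Finset.mem_range, Finset.mem_Ico]; omega)]
    refine Finset.sum_congr rfl fun d hd => ?_
    rw [Finset.sum_const, Nat.card_Ico, nsmul_eq_mul, Nat.cast_sub (Finset.mem_Ico.1 hd).2.le]
  have hupper : ∑ i : Fin p, ∑ d ∈ Finset.Ico 1 (p - i : ℕ), f d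
      = ∑ d ∈ Finset.Ico 1 p, ((p : R) - d) * f d := by
    rw [Fin.sum_univ_eq_sum_range (fun i => ∑ d ∈ Finset.Ico 1 (p - i), f d),
      Finset.sum_comm' (t' := Finset.Ico 1 p) (s' := fun d => Finset.range (p - d))
        (by simp only [Finset.mem_range, Finset.mem_Ico]; omega)]
    refine Finset.sum_congr rfl fun d hd => ?_
    rw [Finset.sum_const, Finset.card_range, nsmul_eq_mul, Nat.cast_sub (Finset.mem_Ico.1 hd).2.le]
  simp_rw [sum_symmToeplitz_apply, Finset.range_eq_Ico,
    Finset.sum_eq_sum_Ico_succ_bot (Nat.succ_pos _), Finset.sum_add_distrib, zero_add]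
  rw [hlower, hupper, Finset.sum_const, Finset.card_fin, nsmul_eq_mul, add_assoc, ← two_mul,
    Finset.mul_sum]
  simp_rw [mul_assoc]

theorem trace_symmToeplitz_mul {R : Type*} [CommRing R] (p : ℕ) (f g : ℕ → R) :
    (symmToeplitz p f * symmToeplitz p g).trace
      = p * (f 0 * g 0) + ∑ d ∈ Finset.Ico 1 p, 2 * ((p : R) - d) * (f d * g d) := by
  rw [← sum_sum_symmToeplitz_apply p fun d => f d * g d]
  refine Finset.sum_congr rfl fun i _ => ?_
  rw [diag_apply, mul_apply]
  refine Finset.sum_congr rfl fun j _ => ?_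
  rw [(isSymm_symmToeplitz p g).apply i j]
  rfl

theorem apply_add_apply_lt_of_posDef {ι : Type*} [Finite ι] {M : Matrix ι ι ℝ} (hM : M.PosDef)
    {i j : ι} (hij : i ≠ j) : M i j + M j i < M i i + M j j := by
  classical
  have := Fintype.ofFinite ι
  have hx : (Pi.single i 1 - Pi.single j 1 : ι → ℝ) ≠ 0 := fun h => by
    simpa [hij] using congrFun h i
  have h := hM.dotProduct_mulVec_pos hx
  rw [star_trivial, mulVec_sub, sub_dotProduct, dotProduct_sub, dotProduct_sub] at h
  simp only [mulVec_single_one, single_one_dotProduct, col_apply] at h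
  linarith

theorem lt_of_posDef_symmToeplitz {p : ℕ} {f : ℕ → ℝ} (hf : (symmToeplitz p f).PosDef) {d : ℕ}
    (hd : 0 < d) (hdp : d < p) : f d < f 0 := by
  have h := apply_add_apply_lt_of_posDef hf (i := ⟨d, hdp⟩) (j := ⟨0, hd.trans hdp⟩)
    (by simpa using hd.ne')
  simp only [symmToeplitz, of_apply, Nat.cast_zero, sub_zero, zero_sub, sub_self, Int.natAbs_neg,
    Int.natAbs_natCast, Int.natAbs_zero] at h
  linarith

end Toeplitz

section LagMatrices

/-- The symbol of `A_{1:S}` as a symmetric Toeplitz matrix of order `p`. -/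
noncomputable def lagWeight (p S d : ℕ) : ℝ :=
  if d ∈ Finset.Icc 1 S then 1 / (2 * ((p : ℝ) - d)) else 0

theorem sum_lagMatrix_eq_symmToeplitz (p S : ℕ) :
    ∑ j ∈ Finset.Icc 1 S, lagMatrix p j = symmToeplitz p (lagWeight p S) := by
  ext k l
  simp only [Matrix.sum_apply, lagMatrix, symmToeplitz, of_apply, lagWeight, Finset.sum_ite_eq]

theorem isSymm_sum_lagMatrix (p S : ℕ) : (∑ j ∈ Finset.Icc 1 S, lagMatrix p j).IsSymm :=
  sum_lagMatrix_eq_symmToeplitz p S ▸ isSymm_symmToeplitz p _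

theorem lagWeight_zero (p S : ℕ) : lagWeight p S 0 = 0 := by simp [lagWeight]

variable {p S : ℕ}

theorem natCast_sub_pos_of_mem_Icc (hS : S < p) {d : ℕ} (hd : d ∈ Finset.Icc 1 S) :
    (0 : ℝ) < p - d :=
  sub_pos.2 (Nat.cast_lt.2 ((Finset.mem_Icc.1 hd).2.trans_lt hS))

theorem lagWeight_of_mem {d : ℕ} (hd : d ∈ Finset.Icc 1 S) :
    lagWeight p S d = 1 / (2 * ((p : ℝ) - d)) :=
  if_pos hd

theorem lagWeight_of_lt {d : ℕ} (hd : S < d) : lagWeight p S d = 0 :=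
  if_neg fun h => hd.not_ge (Finset.mem_Icc.1 h).2

theorem lagWeight_nonneg (hS : S < p) (d : ℕ) : 0 ≤ lagWeight p S d := by
  rw [lagWeight]
  split_ifs with hd
  · have := natCast_sub_pos_of_mem_Icc hS hd
    positivity
  · exact le_rfl

theorem sum_Ico_eq_sum_Icc_of_eq_zero (hS : S < p) {f : ℕ → ℝ}
    (hf : ∀ d, S < d → d < p → f d = 0) :
    ∑ d ∈ Finset.Ico 1 p, f d = ∑ d ∈ Finset.Icc 1 S, f d := by
  symm
  refine Finset.sum_subset (fun d hd => ?_) fun d hd hdS => ?_ <;>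
    simp only [Finset.mem_Icc, Finset.mem_Ico] at *
  · omega
  · exact hf d (by omega) (by omega)

theorem trace_sum_lagMatrix_mul_symmToeplitz (hS : S < p) (g : ℕ → ℝ) :
    ((∑ j ∈ Finset.Icc 1 S, lagMatrix p j) * symmToeplitz p g).trace
      = ∑ d ∈ Finset.Icc 1 S, g d := by
  rw [sum_lagMatrix_eq_symmToeplitz, trace_symmToeplitz_mul, lagWeight_zero, zero_mul, mul_zero,
    zero_add, sum_Ico_eq_sum_Icc_of_eq_zero hS fun d hd _ => by rw [lagWeight_of_lt hd]; ring]
  refine Finset.sum_congr rfl fun d hd => ?_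
  rw [lagWeight_of_mem hd]
  have := natCast_sub_pos_of_mem_Icc hS hd
  field_simp

theorem sum_Icc_lagWeight_le (hS : S < p) :
    ∑ d ∈ Finset.Icc 1 S, lagWeight p S d ≤ S / ((p : ℝ) - S) / 2 := by
  have hpS : (0 : ℝ) < p - S := sub_pos.2 (Nat.cast_lt.2 hS)
  calc ∑ d ∈ Finset.Icc 1 S, lagWeight p S d
      ≤ ∑ _d ∈ Finset.Icc 1 S, 1 / (2 * ((p : ℝ) - S)) := by
        refine Finset.sum_le_sum fun d hd => ?_
        rw [lagWeight_of_mem hd]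
        have : (d : ℝ) ≤ S := Nat.cast_le.2 (Finset.mem_Icc.1 hd).2
        gcongr
    _ = S / ((p : ℝ) - S) / 2 := by
        rw [Finset.sum_const, Nat.card_Icc, nsmul_eq_mul, Nat.add_sub_cancel]
        field_simp

theorem abs_dotProduct_sum_lagMatrix_mulVec_le (hS : S < p) (x : Fin p → ℝ) :
    |x ⬝ᵥ (∑ j ∈ Finset.Icc 1 S, lagMatrix p j) *ᵥ x| ≤ S / ((p : ℝ) - S) * (x ⬝ᵥ x) := by
  refine abs_dotProduct_mulVec_le (isSymm_sum_lagMatrix p S) (fun i => ?_) x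
  rw [sum_lagMatrix_eq_symmToeplitz]
  refine (sum_abs_symmToeplitz_apply_le (fun d _ => lagWeight_nonneg hS d) i).trans ?_
  rw [sum_Ico_eq_sum_Icc_of_eq_zero hS fun _ hd _ => lagWeight_of_lt hd, lagWeight_zero]
  linarith [sum_Icc_lagWeight_le hS]

theorem trace_sum_lagMatrix_mul_self_le (hS : S < p) :
    ((∑ j ∈ Finset.Icc 1 S, lagMatrix p j) * ∑ j ∈ Finset.Icc 1 S, lagMatrix p j).trace
      ≤ S / ((p : ℝ) - S) / 2 := by
  nth_rw 2 [sum_lagMatrix_eq_symmToeplitz]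
  rw [trace_sum_lagMatrix_mul_symmToeplitz hS]
  exact sum_Icc_lagWeight_le hS

end LagMatrices

section Test

variable {p n s S : ℕ} {u σ σ0 t : ℝ}

theorem memFplus.exists_symbol {C : Matrix (Fin p) (Fin p) ℝ} (hC : memFplus p s S σ σ0 C)
    (hS : S < p) (hσ : 0 ≤ σ) :
    ∃ v : ℕ → ℝ, C = symmToeplitz p v ∧ v 0 = σ0 ∧ (∀ d, 0 < d → d < p → 0 ≤ v d) ∧
      (∀ d, S < d → d < p → v d = 0) ∧ s * σ ≤ ∑ d ∈ Finset.Icc 1 S, v d := by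
  obtain ⟨-, v, hv0, hv, T, hTS, rfl, hTσ, hTv⟩ := hC
  have hnonneg (d : ℕ) (hd : 0 < d) (hdp : d < p) : 0 ≤ v d := by
    by_cases hdT : d ∈ T
    · exact hσ.trans (hTσ d hdT)
    · exact (hTv d hd (by omega) hdT).ge
  refine ⟨v, Matrix.ext hv, hv0, hnonneg, fun d hd hdp => hTv d (by omega) (by omega)
    fun hdT => hd.not_ge (Finset.mem_Icc.1 (hTS hdT)).2, ?_⟩
  rw [← nsmul_eq_mul]
  exact (Finset.card_nsmul_le_sum _ _ _ hTσ).trans <|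
    Finset.sum_le_sum_of_subset_of_nonneg hTS fun d hd _ =>
      hnonneg d (Finset.mem_Icc.1 hd).1 ((Finset.mem_Icc.1 hd).2.trans_lt hS)

theorem memFplus.lt {C : Matrix (Fin p) (Fin p) ℝ} (hC : memFplus p s S σ σ0 C) (hs : 1 ≤ s)
    (hS : S < p) : σ < σ0 := by
  obtain ⟨hpd, v, rfl, hv, T, hTS, rfl, hTσ, -⟩ := hC
  obtain ⟨d, hd⟩ := Finset.card_pos.1 hs
  obtain ⟨hd1, hdS⟩ := Finset.mem_Icc.1 (hTS hd)
  have hsymbol : C = symmToeplitz p v := Matrix.ext hv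
  exact (hTσ d hd).trans_lt (lt_of_posDef_symmToeplitz (hsymbol ▸ hpd) hd1 (hdS.trans_lt hS))

theorem iidGaussian_trace_tail_le_exp_neg_div_four (n : ℕ) {C M : Matrix (Fin p) (Fin p) ℝ}
    {K b : ℝ} (hC : C.PosDef) (hM : M.IsSymm) (hK : 0 < K) (hb : 0 < b) (ht0 : 0 ≤ t)
    (hCK : ∀ x, x ⬝ᵥ C *ᵥ x ≤ K * (x ⬝ᵥ x)) (hMb : ∀ x, |x ⬝ᵥ M *ᵥ x| ≤ b * (x ⬝ᵥ x))
    (hMM : (M * M).trace ≤ b / 2) (ht₁ : u * b ≤ n * t ^ 2) (ht₂ : 2 * (u * b) ≤ n * t) :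
    iidGaussian n p C {X | K * t ≤ (M * (sampleCov X - C)).trace}
      ≤ ENNReal.ofReal (exp (-u / 4)) := by
  refine (iidGaussian_hansonWright_of_le n hC hM hK hb (half_pos hb) ht0 hCK hMb hMM).trans
    (ENNReal.ofReal_le_ofReal (exp_le_exp.2 ?_))
  rw [neg_div, neg_le_neg_iff, mul_min_of_nonneg _ _ (by positivity), le_min_iff]
  constructor
  · rw [← sub_nonneg]
    have : n / 8 * (t ^ 2 / (b / 2)) - u / 4 = (n * t ^ 2 - u * b) / (4 * b) := by
      field_simp
      ring
    rw [this]
    exact div_nonneg (sub_nonneg.2 ht₁) (by positivity)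
  · have : n / 8 * (t / b) - u / 4 = (n * t - 2 * (u * b)) / (8 * b) := by
      field_simp
      ring
    rw [← sub_nonneg, this]
    exact div_nonneg (sub_nonneg.2 ht₂) (by positivity)

theorem iidGaussian_one_reject_le (n : ℕ) (hS0 : 0 < S) (hS : S < p) (ht0 : 0 ≤ t)
    (ht₁ : u * (S / ((p : ℝ) - S)) ≤ n * t ^ 2) (ht₂ : 2 * (u * (S / ((p : ℝ) - S))) ≤ n * t) :
    iidGaussian n p 1 {X | ((∑ j ∈ Finset.Icc 1 S, lagMatrix p j) * (sampleCov X - 1)).trace ≥ t}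
      ≤ ENNReal.ofReal (exp (-u / 4)) := by
  have hpS : (0 : ℝ) < p - S := sub_pos.2 (Nat.cast_lt.2 hS)
  have hS0' : (0 : ℝ) < S := Nat.cast_pos.2 hS0
  simpa only [one_mul] using iidGaussian_trace_tail_le_exp_neg_div_four n PosDef.one
    (isSymm_sum_lagMatrix p S) one_pos (div_pos hS0' hpS) ht0 (fun x => by simp)
    (abs_dotProduct_sum_lagMatrix_mulVec_le hS) (trace_sum_lagMatrix_mul_self_le hS) ht₁ ht₂

theorem iidGaussian_symmToeplitz_accept_le (n : ℕ) (hS0 : 0 < S) (hS : S < p) (ht0 : 0 ≤ t)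
    (ht₁ : u * (S / ((p : ℝ) - S)) ≤ n * t ^ 2) (ht₂ : 2 * (u * (S / ((p : ℝ) - S))) ≤ n * t)
    {v : ℕ → ℝ} (hv : (symmToeplitz p v).PosDef) (hv0 : v 0 = 1)
    (hvpos : ∀ d, 0 < d → d < p → 0 ≤ v d) (hvS : ∀ d, S < d → d < p → v d = 0)
    (hvt : (2 + 2 * ∑ d ∈ Finset.Icc 1 S, v d) * t ≤ ∑ d ∈ Finset.Icc 1 S, v d) :
    iidGaussian n p (symmToeplitz p v)
        {X | ((∑ j ∈ Finset.Icc 1 S, lagMatrix p j) * (sampleCov X - 1)).trace < t}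
      ≤ ENNReal.ofReal (exp (-u / 4)) := by
  have hpS : (0 : ℝ) < p - S := sub_pos.2 (Nat.cast_lt.2 hS)
  have hS0' : (0 : ℝ) < S := Nat.cast_pos.2 hS0
  set A := ∑ j ∈ Finset.Icc 1 S, lagMatrix p j with hA
  set m := ∑ d ∈ Finset.Icc 1 S, v d with hm
  have hm0 : 0 ≤ m := Finset.sum_nonneg fun d hd =>
    hvpos d (Finset.mem_Icc.1 hd).1 ((Finset.mem_Icc.1 hd).2.trans_lt hS)
  have hnorm (x : Fin p → ℝ) : x ⬝ᵥ symmToeplitz p v *ᵥ x ≤ (1 + 2 * m) * (x ⬝ᵥ x) := by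
    refine (le_abs_self _).trans
      (abs_dotProduct_mulVec_le (isSymm_symmToeplitz p v) (fun i => ?_) x)
    rw [hm, ← sum_Ico_eq_sum_Icc_of_eq_zero hS hvS, ← hv0]
    refine sum_abs_symmToeplitz_apply_le (fun d hdp => ?_) i
    rcases d.eq_zero_or_pos with rfl | hd
    · rw [hv0]
      exact zero_le_one
    · exact hvpos d hd hdp
  have hset : {X : Fin n → Fin p → ℝ | (A * (sampleCov X - 1)).trace < t} ⊆
      {X | (1 + 2 * m) * t ≤ (-A * (sampleCov X - symmToeplitz p v)).trace} := by
    intro X (hX : _ < t)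
    have hone : A.trace = 0 := by
      rw [trace, hA, sum_lagMatrix_eq_symmToeplitz]
      exact Finset.sum_eq_zero fun i _ => by simp [symmToeplitz, lagWeight_zero]
    rw [mul_sub, trace_sub, mul_one, hone] at hX
    rw [Set.mem_ofPred_eq, neg_mul, trace_neg, mul_sub, trace_sub,
      trace_sum_lagMatrix_mul_symmToeplitz hS]
    linarith
  refine (measure_mono hset).trans (iidGaussian_trace_tail_le_exp_neg_div_four n hv
    (isSymm_sum_lagMatrix p S).neg (by positivity) (div_pos hS0' hpS) ht0 hnorm (fun x => ?_) ?_
    ht₁ ht₂)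
  · rw [neg_mulVec, dotProduct_neg, abs_neg]
    exact abs_dotProduct_sum_lagMatrix_mulVec_le hS x
  · rw [neg_mul_neg]
    exact trace_sum_lagMatrix_mul_self_le hS

theorem iidGaussian_accept_le_of_memFplus (n : ℕ) (hs : 1 ≤ s) (hsS : s ≤ S) (hS : S < p)
    (ht0 : 0 ≤ t) (ht₁ : u * (S / ((p : ℝ) - S)) ≤ n * t ^ 2)
    (ht₂ : 2 * (u * (S / ((p : ℝ) - S))) ≤ n * t) (hσ : 2 * ((s : ℝ) + 1) / s * t ≤ σ)
    {C : Matrix (Fin p) (Fin p) ℝ} (hC : memFplus p s S σ 1 C) :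
    iidGaussian n p C {X | ((∑ j ∈ Finset.Icc 1 S, lagMatrix p j) * (sampleCov X - 1)).trace < t}
      ≤ ENNReal.ofReal (exp (-u / 4)) := by
  have hσ0 : 0 ≤ σ := (by positivity : 0 ≤ 2 * ((s : ℝ) + 1) / s * t).trans hσ
  have hσ1 : σ < 1 := hC.lt hs hS
  have hpd := hC.1
  obtain ⟨v, rfl, hv0, hvpos, hvS, hsv⟩ := hC.exists_symbol hS hσ0
  set m := ∑ d ∈ Finset.Icc 1 S, v d
  refine iidGaussian_symmToeplitz_accept_le n (hs.trans hsS) hS ht0 ht₁ ht₂ hpd hv0 hvpos hvS ?_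
  have hs0 : (0 : ℝ) < s := Nat.cast_pos.2 hs
  have hsep : 2 * (s + 1) * t ≤ s * σ := by
    rwa [div_mul_eq_mul_div, div_le_iff₀' hs0] at hσ
  have hslack : 1 ≤ (s + 1) * (1 - 2 * t) := by nlinarith
  have ht1 : 0 ≤ 1 - 2 * t := (pos_of_mul_pos_right (one_pos.trans_le hslack) (by positivity)).le
  have hmean : 2 * t ≤ m * (1 - 2 * t) :=
    calc 2 * t ≤ 2 * t * ((s + 1) * (1 - 2 * t)) := le_mul_of_one_le_right (by positivity) hslack
      _ = 2 * (s + 1) * t * (1 - 2 * t) := by ring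
      _ ≤ m * (1 - 2 * t) := mul_le_mul_of_nonneg_right (hsep.trans hsv) ht1
  linarith

theorem test_MS_plus_risk_general {n : ℕ} (hn : 0 < n) (hs : 1 ≤ s) (hsS : s ≤ S) (hS : S < p)
    (ht0 : 0 ≤ t) (ht₁ : u * S / (n * ((p : ℝ) - S)) ≤ t ^ 2)
    (ht₂ : 2 * u * S / (n * ((p : ℝ) - S)) ≤ t) (hσ : 2 * ((s : ℝ) + 1) / s * t ≤ σ) :
    iidGaussian n p 1
        {X | ((∑ j ∈ Finset.Icc 1 S, lagMatrix p j) * (sampleCov X - 1)).trace ≥ t}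
      + ⨆ (Cov : Matrix (Fin p) (Fin p) ℝ) (_ : memFplus p s S σ 1 Cov), iidGaussian n p Cov
        {X | ((∑ j ∈ Finset.Icc 1 S, lagMatrix p j) * (sampleCov X - 1)).trace < t}
      ≤ ENNReal.ofReal (2 * exp (-u / 4)) := by
  have hn' : (0 : ℝ) < n := Nat.cast_pos.2 hn
  have hnt₁ : u * (S / ((p : ℝ) - S)) ≤ n * t ^ 2 := by
    rwa [← div_le_iff₀' hn', ← mul_div_assoc, div_div, mul_comm ((p : ℝ) - S)]
  have hnt₂ : 2 * (u * (S / ((p : ℝ) - S))) ≤ n * t := by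
    rwa [← div_le_iff₀' hn', ← mul_assoc, ← mul_div_assoc, div_div, mul_comm ((p : ℝ) - S)]
  rw [two_mul, ENNReal.ofReal_add (exp_pos _).le (exp_pos _).le]
  exact add_le_add (iidGaussian_one_reject_le n (hs.trans hsS) hS ht0 hnt₁ hnt₂)
    (iSup₂_le fun _ hC => iidGaussian_accept_le_of_memFplus n hs hsS hS ht0 hnt₁ hnt₂ hσ hC)

end Test

/-- Risk bound for the one-sided moderately-sparse test `Δ^{MS+}`. -/
theorem test_MS_plus_risk {p n s S : ℕ} (hn : 0 < n) (hs : 1 ≤ s) (hsS : s ≤ S)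
    (hS : (S : ℝ) < (p:ℝ)/2) (u σ t : ℝ) (hu : 0 < u)
    (ht : t = max (Real.sqrt (u * S / (n * ((p:ℝ) - S)))) (2 * u * S / (n * ((p:ℝ) - S))))
    (hσ : σ ≥ (2 * ((s:ℝ) + 1) / s) * t) :
    (iidGaussian n p 1) {X |
        Matrix.trace ((∑ j ∈ Finset.Icc 1 S, lagMatrix p j) * (sampleCov X - 1)) ≥ t}
    + ⨆ (Cov : Matrix (Fin p) (Fin p) ℝ) (_ : memFplus p s S σ 1 Cov),
        (iidGaussian n p Cov) {X |
          Matrix.trace ((∑ j ∈ Finset.Icc 1 S, lagMatrix p j) * (sampleCov X - 1)) < t}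
    ≤ ENNReal.ofReal (2 * Real.exp (-u/4)) := by
  have hSp : S < p := by exact_mod_cast hS.trans_le (half_le_self p.cast_nonneg)
  obtain ⟨ht0, ht₁⟩ := sqrt_le_iff.1 (ht ▸ le_max_left _ _)
  exact test_MS_plus_risk_general hn hs hsS hSp ht0 ht₁ (ht ▸ le_max_right _ _) hσ
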